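/- Define I := ∫₀^{π/2}∫₀^{π/2}∫₀^{π/2}∫₀^{π/2} (1 − cos²φ₃) · (3/(8π²)) · sin φ₁ · sin²φ₂ · sin³φ₃ dφ₃ dφ₂ dφ₁ dθ and J := ∫₀^{π/2}∫₀^{π/2}∫₀^{π/2}∫₀^{π/2} √(1 − cos²φ₂ · sin²φ₃) · √(1 − cos²φ₃) · (3/(8π²)) · sin φ₁ · sin²φ₂ · sin³φ₃ dφ₃ dφ₂ dφ₁ dθ. Then 32 · (4/(3π))² · (5I + 20J) = (4/(81π⁴)) · [ 144π² − 10·Γ(1/4)⁴ + 45π³·( 8·F(2) − F(3) ) ], where F(b) := Σ_{k=0}^{∞} [ (−1/2)_k · (1/2)_k · (3/2)_k ] / [ (1)_k · (b)_k · k! ] and (a)_k is the Pochhammer symbol. (This is the second moment E(mw²) of the mean width of the projection of a unit 5-cube onto a uniformly random 4-subspace of ℝ⁵, equal to 3.516040901689803…) -/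

import Mathlib

open Real

/-- The generalized hypergeometric value `₃F₂(−1/2, 1/2, 3/2; 1, b; 1)`, written as
an absolutely convergent series in Pochhammer symbols. -/
noncomputable def F3F2 (b : ℝ) : ℝ :=
  ∑' k : ℕ,
    ((ascPochhammer ℝ k).eval (-1/2) * (ascPochhammer ℝ k).eval (1/2) *
      (ascPochhammer ℝ k).eval (3/2)) /
    ((ascPochhammer ℝ k).eval 1 * (ascPochhammer ℝ k).eval b * (k.factorial : ℝ))

/-!
Expanding `√(1 - cos² x * sin² y)` in powers of `cos² x * sin² y` and integrating termwise turns
the second integral into a series whose terms are cubes of Wallis ratios times a rational function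
of the index. Up to a telescoping part, this series is a combination of the two given `₃F₂` values
and `₃F₂(1/2, 1/2, 1/2; 1, 1; 1)`, which Dixon's theorem evaluates. For Dixon's theorem, a
Zeilberger certificate shows that both sides satisfy the same recurrence under `a ↦ a + 2`, and
both sides tend to `1` as `a → ∞`.
-/

section Asymptotics

open Filter Topology Asymptotics

theorem ne_neg_natCast {x : ℝ} (hx : 0 < x) (m : ℕ) : x ≠ -m := by
  have : (0 : ℝ) ≤ m := m.cast_nonneg
  linarith

theorem mul_ascPochhammer_eval_add_one {R : Type*} [CommSemiring R] (x : R) (n : ℕ) :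
    x * (ascPochhammer R n).eval (x + 1) = (ascPochhammer R n).eval x * (x + n) := by
  rw [← ascPochhammer_succ_eval, ascPochhammer_succ_left]
  simp

theorem ascPochhammer_eval_eq_prod_range {R : Type*} [CommSemiring R] (x : R) (n : ℕ) :
    (ascPochhammer R n).eval x = ∏ j ∈ Finset.range n, (x + j) := by
  induction n with
  | zero => simp
  | succ n ih => rw [ascPochhammer_succ_eval, ih, Finset.prod_range_succ]

theorem ascPochhammer_eval_mul_gamma {x : ℝ} (hx : 0 < x) (n : ℕ) :
    (ascPochhammer ℝ n).eval x * Gamma x = Gamma (x + n) := by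
  induction n with
  | zero => simp
  | succ n ih =>
    rw [ascPochhammer_succ_eval, mul_right_comm, ih, Nat.cast_succ, ← add_assoc,
      Gamma_add_one (by positivity), mul_comm]

theorem tendsto_natCast_add_inv_atTop (x : ℝ) :
    Tendsto (fun n : ℕ ↦ ((n : ℝ) + x)⁻¹) atTop (𝓝 0) :=
  (tendsto_atTop_add_const_right _ x tendsto_natCast_atTop_atTop).inv_tendsto_atTop

theorem tendsto_quadratic_div_mul_atTop (p₀ p₁ p₂ x y : ℝ) :
    Tendsto (fun n : ℕ ↦ (p₀ + p₁ * n + p₂ * (n : ℝ) ^ 2) / (((n : ℝ) + x) * (n + y)))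
      atTop (𝓝 p₂) := by
  have hx := tendsto_natCast_add_inv_atTop x
  have hy := tendsto_natCast_add_inv_atTop y
  have hx' := tendsto_natCast_div_add_atTop x
  have hy' := tendsto_natCast_div_add_atTop y
  convert ((hx.mul hy).const_mul p₀).add (((hx'.mul hy).const_mul p₁).add
    ((hx'.mul hy').const_mul p₂)) using 2
  · rw [div_eq_mul_inv, mul_inv]
    ring
  · ring

theorem tendsto_ascPochhammer_div_mul_rpow {x : ℝ} (hx : ∀ m : ℕ, x ≠ -m) (y : ℝ) :
    Tendsto (fun n : ℕ ↦
      (ascPochhammer ℝ n).eval x / (ascPochhammer ℝ n).eval y * (n : ℝ) ^ (y - x))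
      atTop (𝓝 (Gamma y / Gamma x)) := by
  have ratio_tendsto : Tendsto (fun n : ℕ ↦ ((n : ℝ) + y) / (n + x)) atTop (𝓝 1) := by
    convert (tendsto_natCast_div_add_atTop x).add
      ((tendsto_natCast_add_inv_atTop x).const_mul y) using 2
    · ring
    · ring
  have gamma_tendsto :=
    ((GammaSeq_tendsto_Gamma y).div (GammaSeq_tendsto_Gamma x) (Gamma_ne_zero hx)).mul
      ratio_tendsto
  rw [mul_one] at gamma_tendsto
  refine gamma_tendsto.congr' ?_
  filter_upwards [eventually_gt_atTop 0, tendsto_natCast_atTop_atTop.eventually_gt_atTop (-y)]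
    with n hn hny
  have hn' : (0 : ℝ) < n := by exact_mod_cast hn
  have hxn : x + n ≠ 0 := fun h ↦ hx n (by linarith)
  have hyn : y + n ≠ 0 := by linarith
  rw [Pi.div_apply, GammaSeq, GammaSeq, ← ascPochhammer_eval_eq_prod_range,
    ← ascPochhammer_eval_eq_prod_range, ascPochhammer_succ_eval, ascPochhammer_succ_eval,
    rpow_sub hn', add_comm (n : ℝ) x, add_comm (n : ℝ) y]
  field_simp

theorem ascPochhammer_div_isBigO_rpow {x : ℝ} (hx : ∀ m : ℕ, x ≠ -m) (y : ℝ) :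
    (fun n : ℕ ↦ (ascPochhammer ℝ n).eval x / (ascPochhammer ℝ n).eval y)
      =O[atTop] fun n : ℕ ↦ (n : ℝ) ^ (x - y) := by
  refine (((tendsto_ascPochhammer_div_mul_rpow hx y).isBigO_one ℝ).mul
    (isBigO_refl (fun n : ℕ ↦ (n : ℝ) ^ (x - y)) atTop)).congr' ?_ (by simp)
  filter_upwards [eventually_gt_atTop 0] with n hn
  rw [mul_assoc, ← rpow_add (by exact_mod_cast hn)]
  simp

theorem tendsto_gamma_mul_gamma_div_atTop {x y u v : ℝ} (hx : 0 < x) (hy : 0 < y)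
    (hu : 0 < u) (hv : 0 < v) (h : x + y = u + v) :
    Tendsto (fun n : ℕ ↦ Gamma (x + n) * Gamma (y + n) / (Gamma (u + n) * Gamma (v + n)))
      atTop (𝓝 1) := by
  have hlim := ((tendsto_ascPochhammer_div_mul_rpow (ne_neg_natCast hx) u).mul
    (tendsto_ascPochhammer_div_mul_rpow (ne_neg_natCast hy) v)).mul_const
      (Gamma x * Gamma y / (Gamma u * Gamma v))
  have hone : Gamma u / Gamma x * (Gamma v / Gamma y) *
      (Gamma x * Gamma y / (Gamma u * Gamma v)) = 1 := by
    field_simp [(Gamma_pos_of_pos hx).ne', (Gamma_pos_of_pos hy).ne',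
      (Gamma_pos_of_pos hu).ne', (Gamma_pos_of_pos hv).ne']
  rw [hone] at hlim
  refine hlim.congr' ?_
  filter_upwards [eventually_gt_atTop 0] with n hn
  have hpow : (n : ℝ) ^ (u - x) * (n : ℝ) ^ (v - y) = 1 := by
    rw [← rpow_add (by exact_mod_cast hn), show u - x + (v - y) = 0 by linarith, rpow_zero]
  rw [← ascPochhammer_eval_mul_gamma hx, ← ascPochhammer_eval_mul_gamma hy,
    ← ascPochhammer_eval_mul_gamma hu, ← ascPochhammer_eval_mul_gamma hv,
    mul_mul_mul_comm, hpow, mul_one, div_mul_div_comm, div_mul_div_comm]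
  ring

theorem tsum_succ_sub_eq_of_tendsto {E : Type*} [AddCommGroup E] [TopologicalSpace E]
    [IsTopologicalAddGroup E] [T2Space E] {f : ℕ → E} {l : E} (hf : Tendsto f atTop (𝓝 l))
    (hs : Summable fun n ↦ f (n + 1) - f n) :
    ∑' n, (f (n + 1) - f n) = l - f 0 := by
  refine tendsto_nhds_unique hs.hasSum.tendsto_sum_nat ?_
  simpa only [Finset.sum_range_sub] using hf.sub_const (f 0)

end Asymptotics

section Hypergeometric

open Filter Topology Asymptotics

/-- The `k`-th term of the generalized hypergeometric series `₃F₂(a₁, a₂, a₃; b₁, b₂; 1)`. -/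
noncomputable def hyp3F2Term (a₁ a₂ a₃ b₁ b₂ : ℝ) (k : ℕ) : ℝ :=
  (ascPochhammer ℝ k).eval a₁ * (ascPochhammer ℝ k).eval a₂ * (ascPochhammer ℝ k).eval a₃ /
    ((ascPochhammer ℝ k).eval b₁ * (ascPochhammer ℝ k).eval b₂ * k.factorial)

theorem hyp3F2Term_succ (a₁ a₂ a₃ b₁ b₂ : ℝ) (k : ℕ) :
    hyp3F2Term a₁ a₂ a₃ b₁ b₂ (k + 1) = hyp3F2Term a₁ a₂ a₃ b₁ b₂ k *
      ((a₁ + k) * (a₂ + k) * (a₃ + k) / ((b₁ + k) * (b₂ + k) * (k + 1))) := by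
  simp only [hyp3F2Term, ascPochhammer_succ_eval, Nat.factorial_succ, Nat.cast_mul,
    Nat.cast_succ, div_mul_div_comm]
  ring

theorem hyp3F2Term_isBigO_rpow {a₁ a₂ a₃ : ℝ} (h₁ : ∀ m : ℕ, a₁ ≠ -m) (h₂ : ∀ m : ℕ, a₂ ≠ -m)
    (h₃ : ∀ m : ℕ, a₃ ≠ -m) (b₁ b₂ : ℝ) :
    hyp3F2Term a₁ a₂ a₃ b₁ b₂
      =O[atTop] fun k : ℕ ↦ (k : ℝ) ^ (a₁ + a₂ + a₃ - b₁ - b₂ - 1) := by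
  refine (((ascPochhammer_div_isBigO_rpow h₁ b₁).mul (ascPochhammer_div_isBigO_rpow h₂ b₂)).mul
    (ascPochhammer_div_isBigO_rpow h₃ 1)).congr' (.of_forall fun k ↦ ?_) ?_
  · simp only [hyp3F2Term, div_mul_div_comm, ascPochhammer_eval_one]
  · filter_upwards [eventually_gt_atTop 0] with k hk
    have hk' : (0 : ℝ) < k := by exact_mod_cast hk
    rw [← rpow_add hk', ← rpow_add hk']
    ring_nf

theorem summable_hyp3F2Term {a₁ a₂ a₃ b₁ b₂ : ℝ} (h₁ : ∀ m : ℕ, a₁ ≠ -m)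
    (h₂ : ∀ m : ℕ, a₂ ≠ -m) (h₃ : ∀ m : ℕ, a₃ ≠ -m) (h : a₁ + a₂ + a₃ < b₁ + b₂) :
    Summable (hyp3F2Term a₁ a₂ a₃ b₁ b₂) :=
  summable_of_isBigO_nat (summable_nat_rpow.2 (by linarith))
    (hyp3F2Term_isBigO_rpow h₁ h₂ h₃ b₁ b₂)

theorem tendsto_mul_hyp3F2Term {a₁ a₂ a₃ b₁ b₂ : ℝ} (h₁ : ∀ m : ℕ, a₁ ≠ -m)
    (h₂ : ∀ m : ℕ, a₂ ≠ -m) (h₃ : ∀ m : ℕ, a₃ ≠ -m) (h : a₁ + a₂ + a₃ < b₁ + b₂) :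
    Tendsto (fun k : ℕ ↦ k * hyp3F2Term a₁ a₂ a₃ b₁ b₂ k) atTop (𝓝 0) := by
  have hbound := (isBigO_refl (fun k : ℕ ↦ (k : ℝ)) atTop).mul
    (hyp3F2Term_isBigO_rpow h₁ h₂ h₃ b₁ b₂)
  refine hbound.trans_tendsto (((tendsto_rpow_neg_atTop (sub_pos.2 h)).comp
    tendsto_natCast_atTop_atTop).congr' ?_)
  filter_upwards [eventually_gt_atTop 0] with k hk
  have hk' : (0 : ℝ) < k := by exact_mod_cast hk
  rw [Function.comp_apply, ← rpow_one_add' hk'.le]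
  · ring_nf
  · linarith

end Hypergeometric

section Dixon

open Filter Topology

/-- The `k`-th term of the well-poised series `₃F₂(a, b, c; 1 + a - b, 1 + a - c; 1)` summed by
Dixon's theorem. -/
noncomputable def dixonTerm (a b c : ℝ) : ℕ → ℝ :=
  hyp3F2Term a b c (1 + a - b) (1 + a - c)

/-- The closed form of `₃F₂(a, b, c; 1 + a - b, 1 + a - c; 1)` in Dixon's theorem. -/
noncomputable def dixonValue (a b c : ℝ) : ℝ :=
  Gamma (1 + a / 2) * Gamma (1 + a / 2 - b - c) /
      (Gamma (1 + a / 2 - b) * Gamma (1 + a / 2 - c)) *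
    (Gamma (1 + a - b) * Gamma (1 + a - c) / (Gamma (1 + a) * Gamma (1 + a - b - c)))

/-- The factor relating both sides of Dixon's theorem at `a` to those at `a + 2`. -/
noncomputable def dixonRatio (a b c : ℝ) : ℝ :=
  (1 + a) * (2 + a) * ((1 + a - b - c) * (2 + a - b - c)) *
      ((1 + a / 2 - b) * (1 + a / 2 - c)) /
    ((1 + a / 2) * (1 + a / 2 - b - c) * ((1 + a - b) * (2 + a - b)) *
      ((1 + a - c) * (2 + a - c)))

/-- The certificate found by Zeilberger's algorithm for the recurrence of Dixon's series
under `a ↦ a + 2`. -/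
noncomputable def dixonCertificate (a b c : ℝ) (k : ℕ) : ℝ :=
  -(((a + k) * (a + 1 + k) / (2 + a - 2 * b - 2 * c) + (a + k) - (1 - b) * (1 - c) / a) /
    ((k + (1 + a - b)) * (k + (1 + a - c)))) * (k * dixonTerm a b c k)

variable {a b c : ℝ}

theorem dixonTerm_nonneg (ha : 0 < a) (hb : 0 < b) (hc : 0 < c) (h : b + c < 1 + a / 2) (k : ℕ) :
    0 ≤ dixonTerm a b c k := by
  have hab : 0 < 1 + a - b := by linarith
  have hac : 0 < 1 + a - c := by linarith
  have := ascPochhammer_pos k a ha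
  have := ascPochhammer_pos k b hb
  have := ascPochhammer_pos k c hc
  have := ascPochhammer_pos k _ hab
  have := ascPochhammer_pos k _ hac
  unfold dixonTerm hyp3F2Term
  positivity

theorem summable_dixonTerm (ha : 0 < a) (hb : 0 < b) (hc : 0 < c) (h : b + c < 1 + a / 2) :
    Summable (dixonTerm a b c) :=
  summable_hyp3F2Term (ne_neg_natCast ha) (ne_neg_natCast hb) (ne_neg_natCast hc) (by linarith)

theorem dixonTerm_add_two (ha : 0 < a) (hb : b < 1 + a) (hc : c < 1 + a) (k : ℕ) :
    dixonTerm (a + 2) b c k = dixonTerm a b c k *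
      ((a + k) * (a + 1 + k) / (a * (a + 1)) *
        ((1 + a - b) * (2 + a - b) / ((1 + a - b + k) * (2 + a - b + k))) *
        ((1 + a - c) * (2 + a - c) / ((1 + a - c + k) * (2 + a - c + k)))) := by
  have shift_two {x : ℝ} (hx : 0 < x) : (ascPochhammer ℝ k).eval (x + 2) =
      (ascPochhammer ℝ k).eval x * ((x + k) * (x + 1 + k) / (x * (x + 1))) := by
    have h₁ := mul_ascPochhammer_eval_add_one x k
    have h₂ := mul_ascPochhammer_eval_add_one (x + 1) k
    rw [show x + 1 + 1 = x + 2 by ring] at h₂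
    field_simp
    linear_combination (x : ℝ) * h₂ + (x + 1 + k) * h₁
  have hab : 0 < 1 + a - b := by linarith
  have hac : 0 < 1 + a - c := by linarith
  rw [dixonTerm, dixonTerm, hyp3F2Term, hyp3F2Term, shift_two ha,
    show 1 + (a + 2) - b = 1 + a - b + 2 by ring, show 1 + (a + 2) - c = 1 + a - c + 2 by ring,
    shift_two hab, shift_two hac, show 2 + a - b = 1 + a - b + 1 by ring,
    show 2 + a - c = 1 + a - c + 1 by ring]
  have := ascPochhammer_pos k _ hab
  have := ascPochhammer_pos k _ hac
  field_simp

theorem dixonTerm_sub_ratio_mul (ha : 0 < a) (hb : 0 < b) (hc : 0 < c) (h : b + c < 1 + a / 2)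
    (k : ℕ) :
    dixonTerm a b c k - dixonRatio a b c * dixonTerm (a + 2) b c k =
      dixonCertificate a b c (k + 1) - dixonCertificate a b c k := by
  have hs : 2 + a - 2 * b - 2 * c ≠ 0 := by linarith
  have hab : 1 + a - b ≠ 0 := by linarith
  have hab' : 2 + a - b ≠ 0 := by linarith
  have hac : 1 + a - c ≠ 0 := by linarith
  have hac' : 2 + a - c ≠ 0 := by linarith
  have habk : 1 + a - b + k ≠ 0 := by linarith
  have habk' : 2 + a - b + k ≠ 0 := by linarith
  have hack : 1 + a - c + k ≠ 0 := by linarith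
  have hack' : 2 + a - c + k ≠ 0 := by linarith
  rw [dixonTerm_add_two ha (by linarith) (by linarith), dixonCertificate, dixonCertificate,
    show dixonTerm a b c (k + 1) = _ from hyp3F2Term_succ a b c _ _ k, ← dixonTerm, dixonRatio,
    Nat.cast_succ, show (k : ℝ) + (1 + a - b) = 1 + a - b + k by ring,
    show (k : ℝ) + (1 + a - c) = 1 + a - c + k by ring,
    show (k : ℝ) + 1 + (1 + a - b) = 2 + a - b + k by ring,
    show (k : ℝ) + 1 + (1 + a - c) = 2 + a - c + k by ring]
  generalize dixonTerm a b c k = t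
  field_simp
  ring

theorem tendsto_dixonCertificate (ha : 0 < a) (hb : 0 < b) (hc : 0 < c) (h : b + c < 1 + a / 2) :
    Tendsto (dixonCertificate a b c) atTop (𝓝 0) := by
  have hterm : Tendsto (fun k : ℕ ↦ k * dixonTerm a b c k) atTop (𝓝 0) :=
    tendsto_mul_hyp3F2Term (ne_neg_natCast ha) (ne_neg_natCast hb) (ne_neg_natCast hc)
      (by linarith)
  have hfactor := tendsto_quadratic_div_mul_atTop
    (a * (a + 1) / (2 + a - 2 * b - 2 * c) + a - (1 - b) * (1 - c) / a)
    ((2 * a + 1) / (2 + a - 2 * b - 2 * c) + 1) (1 / (2 + a - 2 * b - 2 * c))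
    (1 + a - b) (1 + a - c)
  convert (hfactor.mul hterm).neg using 2 with k
  · rw [dixonCertificate, neg_mul]
    ring_nf
  · simp

theorem tsum_dixonTerm_eq_ratio_mul (ha : 0 < a) (hb : 0 < b) (hc : 0 < c)
    (h : b + c < 1 + a / 2) :
    ∑' k, dixonTerm a b c k = dixonRatio a b c * ∑' k, dixonTerm (a + 2) b c k := by
  have hs := summable_dixonTerm ha hb hc h
  have hs' : Summable fun k ↦ dixonRatio a b c * dixonTerm (a + 2) b c k :=
    (summable_dixonTerm (by linarith) hb hc (by linarith)).mul_left _
  rw [← tsum_mul_left, ← sub_eq_zero, ← hs.tsum_sub hs']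
  have hdiff := hs.sub hs'
  simp only [dixonTerm_sub_ratio_mul ha hb hc h] at hdiff ⊢
  rw [tsum_succ_sub_eq_of_tendsto (tendsto_dixonCertificate ha hb hc h) hdiff]
  simp [dixonCertificate]

theorem dixonRatio_pos (ha : 0 < a) (hb : 0 < b) (hc : 0 < c) (h : b + c < 1 + a / 2) :
    0 < dixonRatio a b c := by
  have : 0 < 1 + a / 2 - b - c := by linarith
  have : 0 < 1 + a / 2 - b := by linarith
  have : 0 < 1 + a / 2 - c := by linarith
  have : 0 < 1 + a - b := by linarith
  have : 0 < 1 + a - c := by linarith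
  have : 0 < 1 + a - b - c := by linarith
  have : 0 < 2 + a - b := by linarith
  have : 0 < 2 + a - c := by linarith
  have : 0 < 2 + a - b - c := by linarith
  unfold dixonRatio
  positivity

theorem dixonValue_eq_ratio_mul (ha : 0 < a) (hb : 0 < b) (hc : 0 < c)
    (h : b + c < 1 + a / 2) :
    dixonValue a b c = dixonRatio a b c * dixonValue (a + 2) b c := by
  have gamma_succ {x y : ℝ} (hx : 0 < x) (hy : y = x + 1) : Gamma y = x * Gamma x := by
    rw [hy, Gamma_add_one hx.ne']
  have gamma_succ_succ {x x' y : ℝ} (hx : 0 < x) (hx' : x' = x + 1) (hy : y = x' + 1) :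
      Gamma y = x' * (x * Gamma x) := by
    rw [gamma_succ (by linarith) hy, gamma_succ hx hx']
  have : 1 + a - b ≠ 0 := by linarith
  have : 1 + a - c ≠ 0 := by linarith
  have : 1 + a - b - c ≠ 0 := by linarith
  have : 2 + a - b ≠ 0 := by linarith
  have : 2 + a - c ≠ 0 := by linarith
  have : 2 + a - b - c ≠ 0 := by linarith
  have : 2 + a - 2 * b ≠ 0 := by linarith
  have : 2 + a - 2 * c ≠ 0 := by linarith
  have : 2 + a - 2 * b - 2 * c ≠ 0 := by linarith
  rw [dixonValue, dixonValue, dixonRatio,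
    gamma_succ (y := 1 + (a + 2) / 2) (x := 1 + a / 2) (by positivity) (by ring),
    gamma_succ (y := 1 + (a + 2) / 2 - b) (x := 1 + a / 2 - b) (by linarith) (by ring),
    gamma_succ (y := 1 + (a + 2) / 2 - c) (x := 1 + a / 2 - c) (by linarith) (by ring),
    gamma_succ (y := 1 + (a + 2) / 2 - b - c) (x := 1 + a / 2 - b - c) (by linarith) (by ring),
    gamma_succ_succ (y := 1 + (a + 2)) (x' := 2 + a) (x := 1 + a)
      (by linarith) (by ring) (by ring),
    gamma_succ_succ (y := 1 + (a + 2) - b) (x' := 2 + a - b) (x := 1 + a - b)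
      (by linarith) (by ring) (by ring),
    gamma_succ_succ (y := 1 + (a + 2) - c) (x' := 2 + a - c) (x := 1 + a - c)
      (by linarith) (by ring) (by ring),
    gamma_succ_succ (y := 1 + (a + 2) - b - c) (x' := 2 + a - b - c) (x := 1 + a - b - c)
      (by linarith) (by ring) (by ring)]
  field_simp

theorem div_add_mul_add_le {p q x y : ℝ} (hxp : 0 < x + p) (hxq : 0 < x + q) (hxy : x ≤ y)
    (hpq : p * q ≤ x * y) : y / ((y + p) * (y + q)) ≤ x / ((x + p) * (x + q)) := by
  have hyp : 0 < y + p := by linarith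
  have hyq : 0 < y + q := by linarith
  rw [div_le_div_iff₀ (by positivity) (by positivity)]
  linear_combination (y - x) * hpq

theorem dixonTerm_anti (ha : 0 < a) (hb : 0 < b) (hc : 0 < c) (h : b + c < 1 + a / 2)
    (hbc : (1 - b) * (1 - c) ≤ a ^ 2) {a' : ℝ} (haa' : a ≤ a') (k : ℕ) :
    dixonTerm a' b c k ≤ dixonTerm a b c k := by
  induction k with
  | zero => simp [dixonTerm, hyp3F2Term]
  | succ k ih =>
    have ratio_succ (x : ℝ) : (x + k) * (b + k) * (c + k) /
        ((1 + x - b + k) * (1 + x - c + k) * (k + 1)) =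
          (x + k) / ((x + k + (1 - b)) * (x + k + (1 - c))) * ((b + k) * (c + k) / (k + 1)) := by
      rw [div_mul_div_comm]
      ring_nf
    have hyp : 0 < a' + k + (1 - b) := by linarith
    have hyq : 0 < a' + k + (1 - c) := by linarith
    have hratio : (a' + k) / ((a' + k + (1 - b)) * (a' + k + (1 - c))) ≤
        (a + k) / ((a + k + (1 - b)) * (a + k + (1 - c))) :=
      div_add_mul_add_le (by linarith) (by linarith) (by linarith) (by nlinarith)
    rw [dixonTerm, dixonTerm, hyp3F2Term_succ, hyp3F2Term_succ, ← dixonTerm, ← dixonTerm,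
      ratio_succ, ratio_succ]
    refine mul_le_mul ih (by gcongr) ?_ (dixonTerm_nonneg ha hb hc h k)
    have : 0 < a' := by linarith
    positivity

theorem tendsto_dixonTerm_add_two_mul (a b c : ℝ) (k : ℕ) :
    Tendsto (fun n : ℕ ↦ dixonTerm (a + 2 * n) b c k) atTop (𝓝 (if k = 0 then 1 else 0)) := by
  induction k with
  | zero => simp [dixonTerm, hyp3F2Term]
  | succ k ih =>
    have hratio := tendsto_quadratic_div_mul_atTop
      ((a + k) * ((b + k) * (c + k)) / (4 * (k + 1))) (2 * ((b + k) * (c + k)) / (4 * (k + 1))) 0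
      ((1 + a - b + k) / 2) ((1 + a - c + k) / 2)
    convert ih.mul hratio using 2 with n
    · rw [dixonTerm, hyp3F2Term_succ, ← dixonTerm,
        show 1 + (a + 2 * n) - b + k = 2 * (n + (1 + a - b + k) / 2) by ring,
        show 1 + (a + 2 * n) - c + k = 2 * (n + (1 + a - c + k) / 2) by ring]
      generalize (n : ℝ) + (1 + a - b + k) / 2 = u, (n : ℝ) + (1 + a - c + k) / 2 = v
      field_simp
      ring
    · simp

theorem tendsto_tsum_dixonTerm_add_two_mul (ha : 0 < a) (hb : 0 < b) (hc : 0 < c)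
    (h : b + c < 1 + a / 2) :
    Tendsto (fun n : ℕ ↦ ∑' k, dixonTerm (a + 2 * n) b c k) atTop (𝓝 1) := by
  obtain ⟨N, hN⟩ := exists_nat_ge (max 1 ((1 - b) * (1 - c)))
  have hN₁ : (1 : ℝ) ≤ N := (le_max_left _ _).trans hN
  have hN₂ : (1 - b) * (1 - c) ≤ N := (le_max_right _ _).trans hN
  have haN : 0 < a + 2 * N := by positivity
  have hlim := tendsto_tsum_of_dominated_convergence (𝓕 := atTop)
    (summable_dixonTerm haN hb hc (by linarith))
    (tendsto_dixonTerm_add_two_mul a b c) (by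
      filter_upwards [eventually_ge_atTop N] with n hn k
      have hn' : (N : ℝ) ≤ n := by exact_mod_cast hn
      rw [Real.norm_of_nonneg (dixonTerm_nonneg (by linarith) hb hc (by linarith) k)]
      exact dixonTerm_anti haN hb hc (by linarith) (by nlinarith) (by linarith) k)
  simpa only [tsum_ite_eq] using hlim

theorem tendsto_dixonValue_add_two_mul (ha : 0 < a) (hb : 0 < b) (hc : 0 < c)
    (h : b + c < 1 + a / 2) :
    Tendsto (fun n : ℕ ↦ dixonValue (a + 2 * n) b c) atTop (𝓝 1) := by
  have h₁ := tendsto_gamma_mul_gamma_div_atTop (x := 1 + a / 2) (y := 1 + a / 2 - b - c)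
    (u := 1 + a / 2 - b) (v := 1 + a / 2 - c) (by linarith) (by linarith) (by linarith)
    (by linarith) (by ring)
  have h₂ := tendsto_gamma_mul_gamma_div_atTop (x := 1 + a - b) (y := 1 + a - c)
    (u := 1 + a) (v := 1 + a - b - c) (by linarith) (by linarith) (by linarith)
    (by linarith) (by ring)
  have htwo : Tendsto (fun n : ℕ ↦ 2 * n) atTop atTop :=
    tendsto_id.const_mul_atTop' two_pos
  convert h₁.mul (h₂.comp htwo) using 2 with n
  · simp only [dixonValue, Function.comp_apply, Nat.cast_mul, Nat.cast_ofNat]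
    ring_nf
  · simp

theorem tsum_dixonTerm_div_dixonValue_add (ha : 0 < a) (hb : 0 < b) (hc : 0 < c)
    (h : b + c < 1 + a / 2) (n : ℕ) :
    (∑' k, dixonTerm (a + 2 * n) b c k) / dixonValue (a + 2 * n) b c =
      (∑' k, dixonTerm a b c k) / dixonValue a b c := by
  induction n with
  | zero => simp
  | succ n ih =>
    have han : 0 < a + 2 * n := by positivity
    have hn : b + c < 1 + (a + 2 * n) / 2 := by linarith [(n.cast_nonneg : (0 : ℝ) ≤ n)]
    rw [← ih, tsum_dixonTerm_eq_ratio_mul han hb hc hn, dixonValue_eq_ratio_mul han hb hc hn,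
      mul_div_mul_left _ _ (dixonRatio_pos han hb hc hn).ne', Nat.cast_succ,
      show a + 2 * ((n : ℝ) + 1) = a + 2 * n + 2 by ring]

theorem tsum_dixonTerm_eq_dixonValue (ha : 0 < a) (hb : 0 < b) (hc : 0 < c)
    (h : b + c < 1 + a / 2) :
    ∑' k, dixonTerm a b c k = dixonValue a b c := by
  have hlim := (tendsto_tsum_dixonTerm_add_two_mul ha hb hc h).div
    (tendsto_dixonValue_add_two_mul ha hb hc h) one_ne_zero
  simp only [Pi.div_def, tsum_dixonTerm_div_dixonValue_add ha hb hc h, div_one] at hlim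
  exact eq_of_div_eq_one (tendsto_nhds_unique tendsto_const_nhds hlim)

theorem tsum_hyp3F2Term_half :
    ∑' k, hyp3F2Term (1 / 2) (1 / 2) (1 / 2) 1 1 k = Gamma (1 / 4) ^ 4 / (4 * π ^ 3) := by
  have hdixon : ∑' k, hyp3F2Term (1 / 2) (1 / 2) (1 / 2) 1 1 k =
      Gamma (5 / 4) * Gamma (1 / 4) / Gamma (3 / 4) ^ 2 / (Gamma (3 / 2) * Gamma (1 / 2)) := by
    convert tsum_dixonTerm_eq_dixonValue (a := 1 / 2) (b := 1 / 2) (c := 1 / 2) (by norm_num)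
      (by norm_num) (by norm_num) (by norm_num) using 1
    · norm_num [dixonTerm]
    · norm_num [dixonValue]
      ring
  have hpi : (√π) ^ 2 = π := sq_sqrt pi_pos.le
  have hgamma : 0 < Gamma (1 / 4) := Gamma_pos_of_pos (by norm_num)
  have hreflect : Gamma (3 / 4) * Gamma (1 / 4) = √2 * π := by
    have h := Gamma_mul_Gamma_one_sub (1 / 4)
    rw [mul_one_div, sin_pi_div_four] at h
    rw [show (3 / 4 : ℝ) = 1 - 1 / 4 by norm_num, mul_comm, h]
    field_simp
    exact (sq_sqrt zero_le_two).symm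
  have hgamma_five : Gamma (5 / 4) = Gamma (1 / 4) / 4 := by
    rw [show (5 / 4 : ℝ) = 1 / 4 + 1 by norm_num, Gamma_add_one (by norm_num)]
    ring
  have hgamma_three : Gamma (3 / 2) = √π / 2 := by
    rw [show (3 / 2 : ℝ) = 1 / 2 + 1 by norm_num, Gamma_add_one (by norm_num), Gamma_one_half_eq]
    ring
  rw [hdixon, eq_div_of_mul_eq hgamma.ne' hreflect, hgamma_five, hgamma_three, Gamma_one_half_eq]
  field_simp
  rw [hpi, sq_sqrt zero_le_two]
  ring

end Dixon

section WallisRatio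

/-- The ratio `(1/2)ₖ / k! = 4⁻ᵏ * (2k choose k)` in Wallis's formula, the mean value of
`sin²ᵏ` over a quarter period. -/
noncomputable def wallisRatio (k : ℕ) : ℝ :=
  (ascPochhammer ℝ k).eval (1 / 2) / k.factorial

theorem wallisRatio_pos (k : ℕ) : 0 < wallisRatio k :=
  div_pos (ascPochhammer_pos k _ one_half_pos) (by positivity)

theorem wallisRatio_succ (k : ℕ) :
    wallisRatio (k + 1) = wallisRatio k * ((k + 1 / 2) / (k + 1)) := by
  rw [wallisRatio, wallisRatio, ascPochhammer_succ_eval, Nat.factorial_succ, Nat.cast_mul,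
    Nat.cast_succ, div_mul_div_comm]
  ring

theorem wallisRatio_le_one (k : ℕ) : wallisRatio k ≤ 1 := by
  induction k with
  | zero => simp [wallisRatio]
  | succ k ih =>
    rw [wallisRatio_succ]
    exact mul_le_one₀ ih (by positivity) (div_le_one_of_le₀ (by linarith) (by positivity))

theorem two_mul_natCast_sub_one_ne_zero (k : ℕ) : 2 * (k : ℝ) - 1 ≠ 0 := by
  intro h
  have : 2 * (k : ℤ) - 1 = 0 := by exact_mod_cast h
  omega

theorem ascPochhammer_eval_neg_half_div_factorial (k : ℕ) :
    (ascPochhammer ℝ k).eval (-1 / 2) / k.factorial = -(wallisRatio k / (2 * k - 1)) := by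
  have hshift := mul_ascPochhammer_eval_add_one (-1 / 2 : ℝ) k
  have := two_mul_natCast_sub_one_ne_zero k
  rw [show (-1 / 2 + 1 : ℝ) = 1 / 2 by norm_num] at hshift
  rw [wallisRatio]
  generalize (ascPochhammer ℝ k).eval (-1 / 2) = p at hshift ⊢
  field_simp
  linear_combination -2 * hshift

theorem hyp3F2Term_half (k : ℕ) :
    hyp3F2Term (1 / 2) (1 / 2) (1 / 2) 1 1 k = wallisRatio k ^ 3 := by
  rw [hyp3F2Term, wallisRatio, ascPochhammer_eval_one]
  ring

theorem ascPochhammer_eval_three_halves (k : ℕ) :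
    (ascPochhammer ℝ k).eval (3 / 2) = (2 * k + 1) * (ascPochhammer ℝ k).eval (1 / 2) := by
  have h := mul_ascPochhammer_eval_add_one (1 / 2 : ℝ) k
  rw [show (1 / 2 + 1 : ℝ) = 3 / 2 by norm_num] at h
  linear_combination 2 * h

theorem ascPochhammer_eval_two (k : ℕ) :
    (ascPochhammer ℝ k).eval 2 = (k + 1) * k.factorial := by
  have h := mul_ascPochhammer_eval_add_one (1 : ℝ) k
  rw [ascPochhammer_eval_one, one_add_one_eq_two] at h
  linear_combination h

theorem ascPochhammer_eval_three (k : ℕ) :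
    (ascPochhammer ℝ k).eval 3 = (k + 1) * (k + 2) * k.factorial / 2 := by
  have h := mul_ascPochhammer_eval_add_one (2 : ℝ) k
  rw [ascPochhammer_eval_two, two_add_one_eq_three] at h
  linear_combination h / 2

theorem hyp3F2Term_neg_half_two (k : ℕ) :
    hyp3F2Term (-1 / 2) (1 / 2) (3 / 2) 1 2 k =
      -(wallisRatio k ^ 3 * (2 * k + 1) / ((2 * k - 1) * (k + 1))) := by
  have hneg := ascPochhammer_eval_neg_half_div_factorial k
  rw [div_eq_iff (by positivity)] at hneg
  rw [hyp3F2Term, hneg, ascPochhammer_eval_three_halves, ascPochhammer_eval_two,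
    ascPochhammer_eval_one, wallisRatio]
  field_simp

theorem hyp3F2Term_neg_half_three (k : ℕ) :
    hyp3F2Term (-1 / 2) (1 / 2) (3 / 2) 1 3 k =
      2 / (k + 2) * hyp3F2Term (-1 / 2) (1 / 2) (3 / 2) 1 2 k := by
  rw [hyp3F2Term, hyp3F2Term, ascPochhammer_eval_two, ascPochhammer_eval_three]
  field_simp

theorem summable_hyp3F2Term_half : Summable (hyp3F2Term (1 / 2) (1 / 2) (1 / 2) 1 1) :=
  summable_hyp3F2Term (ne_neg_natCast one_half_pos) (ne_neg_natCast one_half_pos)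
    (ne_neg_natCast one_half_pos) (by norm_num)

theorem neg_half_ne_neg_natCast (m : ℕ) : (-1 / 2 : ℝ) ≠ -m := by
  have := two_mul_natCast_sub_one_ne_zero m
  contrapose! this
  linarith

theorem summable_hyp3F2Term_neg_half {b : ℝ} (hb : 1 / 2 < b) :
    Summable (hyp3F2Term (-1 / 2) (1 / 2) (3 / 2) 1 b) :=
  summable_hyp3F2Term neg_half_ne_neg_natCast (ne_neg_natCast one_half_pos)
    (ne_neg_natCast (by norm_num)) (by linarith)

theorem summable_ascPochhammer_neg_half_div_factorial :
    Summable fun k : ℕ ↦ (ascPochhammer ℝ k).eval (-1 / 2) / k.factorial := by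
  have hbound := ascPochhammer_div_isBigO_rpow neg_half_ne_neg_natCast 1
  simp only [ascPochhammer_eval_one] at hbound
  exact summable_of_isBigO_nat (summable_nat_rpow.2 (by norm_num)) hbound

theorem integral_sin_pow_two_mul (m : ℕ) :
    ∫ x in (0 : ℝ)..π / 2, sin x ^ (2 * m) = π / 2 * wallisRatio m := by
  induction m with
  | zero => simp [wallisRatio]
  | succ m ih =>
    rw [mul_add_one, integral_sin_pow, ih, wallisRatio_succ, sin_zero, cos_pi_div_two,
      zero_pow (Nat.succ_ne_zero _)]
    push_cast
    field_simp
    ring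

theorem integral_cos_pow_two_mul (m : ℕ) :
    ∫ x in (0 : ℝ)..π / 2, cos x ^ (2 * m) = π / 2 * wallisRatio m := by
  rw [← integral_sin_pow_two_mul]
  simpa only [sin_pi_div_two_sub, sub_self, sub_zero] using
    intervalIntegral.integral_comp_sub_left (a := 0) (b := π / 2) (fun x ↦ sin x ^ (2 * m)) (π / 2)

theorem integral_cos_pow_two_mul_mul_sin_sq (m : ℕ) :
    ∫ x in (0 : ℝ)..π / 2, cos x ^ (2 * m) * sin x ^ 2 =
      π / 4 * (wallisRatio m / (m + 1)) := by
  have hpow (x : ℝ) :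
      cos x ^ (2 * m) * sin x ^ 2 = cos x ^ (2 * m) - cos x ^ (2 * (m + 1)) := by
    rw [sin_sq]
    ring
  simp only [hpow]
  rw [intervalIntegral.integral_sub (Continuous.intervalIntegrable (by fun_prop) _ _)
    (Continuous.intervalIntegrable (by fun_prop) _ _), integral_cos_pow_two_mul,
    integral_cos_pow_two_mul, wallisRatio_succ]
  field_simp
  ring

end WallisRatio

section TermwiseIntegration

theorem choose_add_natCast_sub_one (a : ℝ) (k : ℕ) :
    Ring.choose (a + k - 1) k = (ascPochhammer ℝ k).eval a / k.factorial := by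
  have hmultichoose := Ring.factorial_nsmul_multichoose_eq_ascPochhammer a k
  rw [Polynomial.ascPochhammer_smeval_eq_eval, nsmul_eq_mul] at hmultichoose
  rw [← hmultichoose, Ring.choose, show a + k - 1 - k + 1 = a by ring,
    mul_div_cancel_left₀ _ (by positivity)]

theorem hasSum_one_sub_rpow_neg (a : ℝ) {x : ℝ} (hx : |x| < 1) :
    HasSum (fun k : ℕ ↦ (ascPochhammer ℝ k).eval a / k.factorial * x ^ k) ((1 - x) ^ (-a)) := by
  have hbinom := (one_div_one_sub_rpow_hasFPowerSeriesOnBall_zero a).hasSum (y := x) (by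
    rw [← ENNReal.ofReal_one, Metric.eball_ofReal]
    simpa using hx)
  rw [zero_add, one_div, ← rpow_neg (by linarith [le_abs_self x])] at hbinom
  simpa only [FormalMultilinearSeries.ofScalars_apply_eq, smul_eq_mul,
    choose_add_natCast_sub_one] using hbinom

theorem hasSum_sqrt_one_sub {x : ℝ} (hx : |x| < 1) :
    HasSum (fun k : ℕ ↦ (ascPochhammer ℝ k).eval (-1 / 2) / k.factorial * x ^ k) √(1 - x) := by
  convert hasSum_one_sub_rpow_neg (-1 / 2) hx using 1
  rw [sqrt_eq_rpow]
  norm_num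

theorem hasSum_integral_mul_of_hasSum_pow {c : ℕ → ℝ} (hc : Summable c) {u v f : ℝ → ℝ}
    (hu : Continuous u) (hv : Continuous v) {s t : ℝ} (hu₁ : ∀ x ∈ Set.uIoc s t, |u x| ≤ 1)
    (hf : ∀ x ∈ Set.uIoc s t, HasSum (fun k ↦ c k * u x ^ k) (f x)) :
    HasSum (fun k ↦ c k * ∫ x in s..t, u x ^ k * v x) (∫ x in s..t, f x * v x) := by
  simp only [← intervalIntegral.integral_const_mul]
  refine intervalIntegral.hasSum_integral_of_dominated_convergence (fun k x ↦ |c k| * |v x|)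
    (fun k ↦ (by fun_prop : Continuous _).aestronglyMeasurable)
    (fun k ↦ .of_forall fun x hx ↦ ?_) (.of_forall fun x _ ↦ hc.abs.mul_right _) ?_
    (.of_forall fun x hx ↦ ?_)
  · rw [norm_eq_abs, abs_mul, abs_mul, abs_pow]
    gcongr
    exact mul_le_of_le_one_left (abs_nonneg _) (pow_le_one₀ (abs_nonneg _) (hu₁ x hx))
  · simp only [tsum_mul_right]
    exact (by fun_prop : Continuous _).intervalIntegrable _ _
  · simpa only [mul_assoc] using (hf x hx).mul_right (v x)

theorem hasSum_integral_sqrt_one_sub_mul_sin_sq {γ : ℝ} (hγ₀ : 0 ≤ γ) (hγ₁ : γ < 1) :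
    HasSum (fun k : ℕ ↦ (ascPochhammer ℝ k).eval (-1 / 2) / k.factorial *
        (π / 2 * wallisRatio (k + 2)) * γ ^ k)
      (∫ y in (0 : ℝ)..π / 2, √(1 - γ * sin y ^ 2) * sin y ^ 4) := by
  have habs (y : ℝ) : |γ * sin y ^ 2| < 1 := by
    rw [abs_of_nonneg (by positivity)]
    nlinarith [sin_sq_le_one y]
  convert hasSum_integral_mul_of_hasSum_pow summable_ascPochhammer_neg_half_div_factorial
    (u := fun y ↦ γ * sin y ^ 2) (v := fun y ↦ sin y ^ 4) (by fun_prop) (by fun_prop)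
    (fun y _ ↦ (habs y).le) (fun y _ ↦ hasSum_sqrt_one_sub (habs y)) using 2 with k
  rw [← integral_sin_pow_two_mul, mul_assoc, mul_comm _ (γ ^ k),
    ← intervalIntegral.integral_const_mul]
  congr 2 with y
  ring

/-- The `k`-th term of the double integral of `√(1 - cos² x * sin² y) * sin⁴ y * sin² x` over
`[0, π / 2]²`, expanded in powers of `cos² x * sin² y`. -/
noncomputable def sqrtMomentTerm (k : ℕ) : ℝ :=
  (ascPochhammer ℝ k).eval (-1 / 2) / k.factorial * (π / 2 * wallisRatio (k + 2)) *
    (π / 4 * (wallisRatio k / (k + 1)))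

theorem hasSum_sqrtMomentTerm :
    HasSum sqrtMomentTerm
      (∫ x in (0 : ℝ)..π / 2,
        (∫ y in (0 : ℝ)..π / 2, √(1 - cos x ^ 2 * sin y ^ 2) * sin y ^ 4) * sin x ^ 2) := by
  have hsum : Summable fun k : ℕ ↦ (ascPochhammer ℝ k).eval (-1 / 2) / k.factorial *
      (π / 2 * wallisRatio (k + 2)) := by
    refine .of_norm_bounded
      (summable_ascPochhammer_neg_half_div_factorial.norm.mul_right (π / 2)) fun k ↦ ?_
    have := wallisRatio_pos (k + 2)
    rw [norm_mul, norm_of_nonneg (by positivity : 0 ≤ π / 2 * wallisRatio (k + 2))]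
    gcongr
    exact mul_le_of_le_one_right (by positivity) (wallisRatio_le_one _)
  convert hasSum_integral_mul_of_hasSum_pow hsum (u := fun x ↦ cos x ^ 2)
    (v := fun x ↦ sin x ^ 2) (by fun_prop) (by fun_prop)
    (fun x _ ↦ by rw [abs_of_nonneg (by positivity)]; exact cos_sq_le_one x)
    (fun x hx ↦ hasSum_integral_sqrt_one_sub_mul_sin_sq (by positivity) ?_) using 2 with k
  · simp only [sqrtMomentTerm, ← pow_mul, integral_cos_pow_two_mul_mul_sin_sq]
  · rw [Set.uIoc_of_le (by positivity)] at hx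
    have := sin_pos_of_pos_of_lt_pi hx.1 (by linarith [hx.2, pi_pos])
    rw [cos_sq']
    nlinarith

end TermwiseIntegration

section DoubleIntegral

open Filter Topology

/-- The telescoping certificate, found by Gosper's algorithm, which reduces the series of the
double integral to the series `₃F₂(-1/2, 1/2, 3/2; 1, 2; 1)`, `₃F₂(-1/2, 1/2, 3/2; 1, 3; 1)` and
`₃F₂(1/2, 1/2, 1/2; 1, 1; 1)`. -/
noncomputable def contiguityCertificate (k : ℕ) : ℝ :=
  -(π ^ 2 / 216) * ((9 + 16 * k + 4 * (k : ℝ) ^ 2) / ((k + -1 / 2) * (k + 1))) *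
    (k * hyp3F2Term (1 / 2) (1 / 2) (1 / 2) 1 1 k)

theorem tendsto_contiguityCertificate : Tendsto contiguityCertificate atTop (𝓝 0) := by
  have hterm : Tendsto (fun k : ℕ ↦ k * hyp3F2Term (1 / 2) (1 / 2) (1 / 2) 1 1 k) atTop (𝓝 0) :=
    tendsto_mul_hyp3F2Term (ne_neg_natCast one_half_pos) (ne_neg_natCast one_half_pos)
      (ne_neg_natCast one_half_pos) (by norm_num)
  have hfactor := tendsto_quadratic_div_mul_atTop 9 16 4 (-1 / 2) 1
  have hlim := (hfactor.const_mul (-(π ^ 2 / 216))).mul hterm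
  rwa [mul_zero] at hlim

theorem sqrtMomentTerm_eq_add_sub (k : ℕ) :
    sqrtMomentTerm k =
      π ^ 2 / 96 * (8 * hyp3F2Term (-1 / 2) (1 / 2) (3 / 2) 1 2 k -
          hyp3F2Term (-1 / 2) (1 / 2) (3 / 2) 1 3 k) -
        π ^ 2 / 108 * hyp3F2Term (1 / 2) (1 / 2) (1 / 2) 1 1 k +
        (contiguityCertificate (k + 1) - contiguityCertificate k) := by
  have := two_mul_natCast_sub_one_ne_zero k
  have : 2 * (k : ℝ) + 1 ≠ 0 := by positivity
  rw [sqrtMomentTerm, ascPochhammer_eval_neg_half_div_factorial, hyp3F2Term_neg_half_three,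
    hyp3F2Term_neg_half_two, contiguityCertificate, contiguityCertificate, hyp3F2Term_half,
    hyp3F2Term_half, wallisRatio_succ, wallisRatio_succ, Nat.cast_succ,
    show (k : ℝ) + 1 + -1 / 2 = (2 * k + 1) / 2 by ring,
    show (k : ℝ) + -1 / 2 = (2 * k - 1) / 2 by ring,
    show (k : ℝ) + 1 + 1 = k + 2 by ring]
  field_simp
  ring

theorem integral_integral_sqrt_one_sub_mul :
    ∫ x in (0 : ℝ)..π / 2,
        (∫ y in (0 : ℝ)..π / 2, √(1 - cos x ^ 2 * sin y ^ 2) * sin y ^ 4) * sin x ^ 2 =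
      π ^ 2 / 96 * (8 * F3F2 2 - F3F2 3) - Gamma (1 / 4) ^ 4 / (432 * π) := by
  have htwo : HasSum (hyp3F2Term (-1 / 2) (1 / 2) (3 / 2) 1 2) (F3F2 2) :=
    (summable_hyp3F2Term_neg_half (by norm_num)).hasSum
  have hthree : HasSum (hyp3F2Term (-1 / 2) (1 / 2) (3 / 2) 1 3) (F3F2 3) :=
    (summable_hyp3F2Term_neg_half (by norm_num)).hasSum
  have hhalf := summable_hyp3F2Term_half.hasSum
  rw [tsum_hyp3F2Term_half] at hhalf
  have hmain := (((htwo.mul_left 8).sub hthree).mul_left (π ^ 2 / 96)).sub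
    (hhalf.mul_left (π ^ 2 / 108))
  have htelescope := hasSum_sqrtMomentTerm.sub hmain
  simp only [sqrtMomentTerm_eq_add_sub, add_sub_cancel_left] at htelescope
  have hzero := tsum_succ_sub_eq_of_tendsto tendsto_contiguityCertificate htelescope.summable
  rw [htelescope.tsum_eq] at hzero
  simp only [contiguityCertificate, Nat.cast_zero, zero_mul, mul_zero, sub_zero] at hzero
  rw [sub_eq_zero.1 hzero]
  field_simp
  ring

theorem integral_diagonal_moment :
    (∫ _θ in (0 : ℝ)..π / 2, ∫ φ₁ in (0 : ℝ)..π / 2, ∫ φ₂ in (0 : ℝ)..π / 2,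
      ∫ φ₃ in (0 : ℝ)..π / 2, (1 - cos φ₃ ^ 2) * (3 / (8 * π ^ 2)) *
        (sin φ₁ * sin φ₂ ^ 2 * sin φ₃ ^ 3)) = 1 / 40 := by
  have hsplit (φ₁ φ₂ φ₃ : ℝ) :
      (1 - cos φ₃ ^ 2) * (3 / (8 * π ^ 2)) * (sin φ₁ * sin φ₂ ^ 2 * sin φ₃ ^ 3) =
        3 / (8 * π ^ 2) * (sin φ₁ * (sin φ₂ ^ 2 * sin φ₃ ^ 5)) := by
    rw [← sin_sq]
    ring
  have hfive : ∫ φ in (0 : ℝ)..π / 2, sin φ ^ 5 = 8 / 15 := by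
    rw [integral_sin_pow 3, integral_sin_pow_three]
    norm_num
  simp only [hsplit, intervalIntegral.integral_const_mul, intervalIntegral.integral_mul_const,
    intervalIntegral.integral_const, integral_sin, integral_sin_sq, hfive, sin_zero,
    cos_zero, cos_pi_div_two, smul_eq_mul]
  field_simp
  ring

theorem integral_offDiagonal_moment :
    (∫ _θ in (0 : ℝ)..π / 2, ∫ φ₁ in (0 : ℝ)..π / 2, ∫ φ₂ in (0 : ℝ)..π / 2,
      ∫ φ₃ in (0 : ℝ)..π / 2, √(1 - cos φ₂ ^ 2 * sin φ₃ ^ 2) * √(1 - cos φ₃ ^ 2) *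
        (3 / (8 * π ^ 2)) * (sin φ₁ * sin φ₂ ^ 2 * sin φ₃ ^ 3)) =
      3 / (16 * π) * ∫ x in (0 : ℝ)..π / 2,
        (∫ y in (0 : ℝ)..π / 2, √(1 - cos x ^ 2 * sin y ^ 2) * sin y ^ 4) * sin x ^ 2 := by
  have hinner (φ₁ φ₂ : ℝ) :
      (∫ φ₃ in (0 : ℝ)..π / 2, √(1 - cos φ₂ ^ 2 * sin φ₃ ^ 2) * √(1 - cos φ₃ ^ 2) *
        (3 / (8 * π ^ 2)) * (sin φ₁ * sin φ₂ ^ 2 * sin φ₃ ^ 3)) =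
      3 / (8 * π ^ 2) * (sin φ₁ *
        ((∫ y in (0 : ℝ)..π / 2, √(1 - cos φ₂ ^ 2 * sin y ^ 2) * sin y ^ 4) * sin φ₂ ^ 2)) := by
    simp only [← intervalIntegral.integral_mul_const, ← intervalIntegral.integral_const_mul]
    refine intervalIntegral.integral_congr fun y hy ↦ ?_
    rw [Set.uIcc_of_le (by positivity)] at hy
    have hsin : sin y = √(1 - cos y ^ 2) :=
      sin_eq_sqrt_one_sub_cos_sq hy.1 (by linarith [hy.2, pi_pos])
    simp only [← hsin]
    ring
  simp only [hinner, intervalIntegral.integral_const_mul, intervalIntegral.integral_mul_const,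
    intervalIntegral.integral_const, integral_sin, cos_zero, cos_pi_div_two, smul_eq_mul]
  field_simp
  ring

end DoubleIntegral

/-- The second moment `E(mw²)` of the mean width of the projection of a unit 5-cube
onto a uniformly random 4-subspace of `ℝ⁵`:
`32·(4/(3π))²·(5I + 20J) = (4/(81π⁴))·[144π² − 10Γ(1/4)⁴ + 45π³(8·₃F₂(−1/2,1/2,3/2;1,2;1) − ₃F₂(−1/2,1/2,3/2;1,3;1))]`. -/
theorem second_moment_mean_width_projection_5cube :
    32 * (4 / (3 * π)) ^ 2 *
      (5 * (∫ _θ in (0:ℝ)..(π/2), ∫ φ₁ in (0:ℝ)..(π/2), ∫ φ₂ in (0:ℝ)..(π/2),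
              ∫ φ₃ in (0:ℝ)..(π/2),
              (1 - Real.cos φ₃ ^ 2) * (3 / (8 * π ^ 2)) *
                (Real.sin φ₁ * Real.sin φ₂ ^ 2 * Real.sin φ₃ ^ 3))
        + 20 * (∫ _θ in (0:ℝ)..(π/2), ∫ φ₁ in (0:ℝ)..(π/2), ∫ φ₂ in (0:ℝ)..(π/2),
              ∫ φ₃ in (0:ℝ)..(π/2),
              Real.sqrt (1 - Real.cos φ₂ ^ 2 * Real.sin φ₃ ^ 2) *
                Real.sqrt (1 - Real.cos φ₃ ^ 2) * (3 / (8 * π ^ 2)) *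
                (Real.sin φ₁ * Real.sin φ₂ ^ 2 * Real.sin φ₃ ^ 3)))
    = (4 / (81 * π ^ 4)) *
        (144 * π ^ 2 - 10 * Real.Gamma (1/4) ^ 4 +
          45 * π ^ 3 * (8 * F3F2 2 - F3F2 3)) := by
  rw [integral_diagonal_moment, integral_offDiagonal_moment,
    integral_integral_sqrt_one_sub_mul]
  field_simp
  ring
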